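/- For odd k with 3 ≤ k ≤ n, the maximum over all signatures σ of the number of negative circles of length k in (K_n, σ) equals the total number of circles of length k in K_n, and is attained by the all-negative signature: max_σ c_k^−(K_n, σ) = c_k^−(−K_n) = c_k(K_n). Moreover, if (K_n, σ) is not antibalanced, then c_k^−(K_n, σ) < c_k(K_n). -/

import Mathlib

/-- The sign of a walk in a signed graph: the product of the signs of its edges. -/
def walkSign {V : Type*} (G : SimpleGraph V) (σ : Sym2 V → ℤˣ) {u v : V}
    (w : G.Walk u v) : ℤˣ :=
  (w.edges.map σ).prod

/-- A signed graph is balanced if every circle (cycle) is positive. -/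
def sgBalanced {V : Type*} (G : SimpleGraph V) (σ : Sym2 V → ℤˣ) : Prop :=
  ∀ ⦃v : V⦄ (w : G.Walk v v), w.IsCycle → walkSign G σ w = 1

/-- A signed graph is antibalanced if its negative (negating every sign) is balanced. -/
def sgAntibalanced {V : Type*} (G : SimpleGraph V) (σ : Sym2 V → ℤˣ) : Prop :=
  sgBalanced G (fun e => -σ e)

/-- `c_k⁻(Σ)`: the number of negative circles of length `k` in a signed graph, a circle
being identified with its edge set. -/
noncomputable def negCircCount {V : Type*} [DecidableEq V] (G : SimpleGraph V)
    (σ : Sym2 V → ℤˣ) (k : ℕ) : ℕ :=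
  {C : Finset (Sym2 V) | ∃ (a : V) (w : G.Walk a a), w.IsCycle ∧ w.length = k ∧
    walkSign G σ w = -1 ∧ w.edges.toFinset = C}.ncard

/-- `c_k(Γ)`: the total number of circles of length `k` in a graph, a circle being
identified with its edge set. -/
noncomputable def circCount {V : Type*} [DecidableEq V] (G : SimpleGraph V) (k : ℕ) :
    ℕ :=
  {C : Finset (Sym2 V) | ∃ (a : V) (w : G.Walk a a), w.IsCycle ∧ w.length = k ∧
    w.edges.toFinset = C}.ncard

/-!
Switching equivalence to a constant signature `s` makes every circle of length `k` have sign
`s ^ k`. Conversely, if all circles of one fixed length `k` in a complete graph have the same sign,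
then every quadrilateral is positive: for `4 ≤ k`, interchange two consecutive vertices of a
`k`-circle; for `k = 3`, glue two triangles along an edge. Positivity of the quadrilaterals
makes all triangles `z a b` through a fixed vertex `z` have the same sign `s`, and switching at
each neighbour `a` of `z` by the sign of `z a` turns the signature into the constant `s`. If the
`k`-circles are positive and `k` is odd, then `s = 1`, so the signature is balanced. The theorem
is this statement for `-σ`.
-/

open SimpleGraph

section WalkSign

variable {V : Type*} {G : SimpleGraph V}

@[simp]
theorem walkSign_nil (σ : Sym2 V → ℤˣ) (v : V) : walkSign G σ (.nil : G.Walk v v) = 1 := rfl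

@[simp]
theorem walkSign_cons (σ : Sym2 V → ℤˣ) {u v w : V} (h : G.Adj u v) (p : G.Walk v w) :
    walkSign G σ (.cons h p) = σ s(u, v) * walkSign G σ p := by
  simp [walkSign]

theorem walkSign_neg (σ : Sym2 V → ℤˣ) {u v : V} (p : G.Walk u v) :
    walkSign G (fun e => -σ e) p = (-1) ^ p.length * walkSign G σ p := by
  induction p with
  | nil => simp
  | cons h p ih =>
    rw [walkSign_cons, walkSign_cons, ih, Walk.length_cons, pow_succ', neg_one_mul,
      neg_mul, neg_mul, mul_left_comm]

theorem walkSign_neg_eq_one_iff {σ : Sym2 V → ℤˣ} {u v : V} {p : G.Walk u v}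
    (hp : Odd p.length) : walkSign G (fun e => -σ e) p = 1 ↔ walkSign G σ p = -1 := by
  rw [walkSign_neg, hp.neg_one_pow, neg_one_mul, neg_eq_iff_eq_neg]

theorem walkSign_eq_prod_toFinset [DecidableEq V] (σ : Sym2 V → ℤˣ) {u v : V}
    {p : G.Walk u v} (hp : p.IsTrail) : walkSign G σ p = ∏ e ∈ p.edges.toFinset, σ e :=
  (List.prod_toFinset σ hp.edges_nodup).symm

theorem sgAntibalanced_neg_one (G : SimpleGraph V) : sgAntibalanced G (fun _ => -1) := by
  intro v w _
  simp [walkSign]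

end WalkSign

section Circles

variable {V : Type*} [DecidableEq V] {G : SimpleGraph V} {σ : Sym2 V → ℤˣ} {k : ℕ}

/-- The circles of length `k` in `G`, as edge sets; they are counted by `circCount`. -/
def circles (G : SimpleGraph V) (k : ℕ) : Set (Finset (Sym2 V)) :=
  {C | ∃ (a : V) (w : G.Walk a a), w.IsCycle ∧ w.length = k ∧ w.edges.toFinset = C}

/-- The negative circles of length `k` in `(G, σ)`, as edge sets; they are counted by
`negCircCount`. -/
def negCircles (G : SimpleGraph V) (σ : Sym2 V → ℤˣ) (k : ℕ) : Set (Finset (Sym2 V)) :=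
  {C | ∃ (a : V) (w : G.Walk a a), w.IsCycle ∧ w.length = k ∧
    walkSign G σ w = -1 ∧ w.edges.toFinset = C}

theorem negCircles_subset_circles : negCircles G σ k ⊆ circles G k :=
  fun _ ⟨a, w, hw, hlen, _, hC⟩ => ⟨a, w, hw, hlen, hC⟩

theorem circles_subset_negCircles_iff :
    circles G k ⊆ negCircles G σ k ↔
      ∀ ⦃a : V⦄ (w : G.Walk a a), w.IsCycle → w.length = k → walkSign G σ w = -1 := by
  refine ⟨fun hsub a w hw hlen => ?_, fun hneg C ⟨a, w, hw, hlen, hC⟩ =>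
    ⟨a, w, hw, hlen, hneg w hw hlen, hC⟩⟩
  obtain ⟨b, w', hw', -, hneg, hedges⟩ := hsub ⟨a, w, hw, hlen, rfl⟩
  rw [walkSign_eq_prod_toFinset σ hw.isTrail, ← hedges,
    ← walkSign_eq_prod_toFinset σ hw'.isTrail, hneg]

variable [Finite V]

theorem negCircCount_le_circCount (G : SimpleGraph V) (σ : Sym2 V → ℤˣ) (k : ℕ) :
    negCircCount G σ k ≤ circCount G k :=
  Set.ncard_le_ncard negCircles_subset_circles

theorem negCircCount_eq_circCount_iff :
    negCircCount G σ k = circCount G k ↔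
      ∀ ⦃a : V⦄ (w : G.Walk a a), w.IsCycle → w.length = k → walkSign G σ w = -1 := by
  rw [← circles_subset_negCircles_iff]
  constructor
  · intro hcard
    exact (Set.eq_of_subset_of_ncard_le negCircles_subset_circles hcard.ge).ge
  · intro hsub
    exact congrArg Set.ncard (negCircles_subset_circles.antisymm hsub)

end Circles

section Switching

variable {V : Type*} {G : SimpleGraph V} {σ : Sym2 V → ℤˣ} {s : ℤˣ}

/-- The signature `σ` of `G` is switching equivalent to the signature with constant value `s`,
with `g` as the switching function. The values of `σ` off the edges of `G` are irrelevant. -/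
def IsSwitchingOfConst (G : SimpleGraph V) (σ : Sym2 V → ℤˣ) (s : ℤˣ) : Prop :=
  ∃ g : V → ℤˣ, ∀ ⦃a b : V⦄, G.Adj a b → σ s(a, b) = g a * s * g b

theorem walkSign_eq_of_forall_adj {g : V → ℤˣ}
    (hg : ∀ ⦃a b : V⦄, G.Adj a b → σ s(a, b) = g a * s * g b) {u v : V} (p : G.Walk u v) :
    walkSign G σ p = g u * s ^ p.length * g v := by
  induction p with
  | nil => simp
  | @cons a b c hab p ih =>
    calc walkSign G σ (.cons hab p)
        = g a * s * g b * (g b * s ^ p.length * g c) := by rw [walkSign_cons, hg hab, ih]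
      _ = g a * (s * s ^ p.length) * g c * (g b * g b) := by ac_rfl
      _ = g a * s ^ (p.length + 1) * g c := by rw [Int.units_mul_self, mul_one, pow_succ']

theorem IsSwitchingOfConst.walkSign_closed (h : IsSwitchingOfConst G σ s) {v : V}
    (w : G.Walk v v) : walkSign G σ w = s ^ w.length := by
  obtain ⟨g, hg⟩ := h
  rw [walkSign_eq_of_forall_adj hg, mul_right_comm, Int.units_mul_self, one_mul]

theorem IsSwitchingOfConst.sgBalanced (h : IsSwitchingOfConst G σ 1) : sgBalanced G σ :=
  fun _ w _ => by rw [h.walkSign_closed, one_pow]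

end Switching

section Cycles

variable {V : Type*} {G : SimpleGraph V}

theorem isCycle_cons_cons {u v w : V} {p : G.Walk v u} (hp : p.IsPath) (huv : u ≠ v)
    (hw : w ∉ p.support) (huw : G.Adj u w) (hwv : G.Adj w v) :
    (Walk.cons huw (Walk.cons hwv p)).IsCycle := by
  refine (Walk.cons_isCycle_iff _ _).2 ⟨hp.cons hw, ?_⟩
  rw [Walk.edges_cons, List.mem_cons, not_or]
  exact ⟨by simp [huv, huw.ne], fun he => hw (p.snd_mem_support_of_mem_edges he)⟩

variable [Fintype V]

theorem exists_isPath_top_of_length (m : ℕ) {F : Finset V} {u v : V} (huv : u ≠ v) (hu : u ∉ F)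
    (hv : v ∉ F) (hcard : F.card + m + 2 ≤ Fintype.card V) :
    ∃ p : (⊤ : SimpleGraph V).Walk u v,
      p.IsPath ∧ p.length = m + 1 ∧ ∀ x ∈ F, x ∉ p.support := by
  classical
  induction m generalizing F u with
  | zero =>
    refine ⟨Walk.cons huv Walk.nil, by simpa using huv, rfl, fun x hx hmem => ?_⟩
    obtain rfl | rfl : x = u ∨ x = v := by simpa using hmem
    exacts [hu hx, hv hx]
  | succ m ih =>
    obtain ⟨x, -, hx⟩ : ∃ x ∈ Finset.univ, x ∉ insert v (insert u F) := by
      apply Finset.exists_mem_notMem_of_card_lt_card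
      rw [Finset.card_univ]
      grind [Finset.card_insert_le]
    obtain ⟨hxv, hxu, hxF⟩ : x ≠ v ∧ x ≠ u ∧ x ∉ F := by simpa using hx
    obtain ⟨p, hp, hlen, havoid⟩ := ih (F := insert u F) hxv (by simp [hxu, hxF])
      (by simp [hv, huv.symm]) (by rw [Finset.card_insert_of_notMem hu]; omega)
    rw [Finset.forall_mem_insert] at havoid
    refine ⟨Walk.cons hxu.symm p, hp.cons havoid.1, by simp [hlen], fun y hy hmem => ?_⟩
    obtain rfl | hmem : y = u ∨ y ∈ p.support := by simpa using hmem
    exacts [hu hy, havoid.2 y hy hmem]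

theorem exists_isCycle_top_of_length {k : ℕ} (h3 : 3 ≤ k) (hk : k ≤ Fintype.card V) :
    ∃ (a : V) (w : (⊤ : SimpleGraph V).Walk a a), w.IsCycle ∧ w.length = k := by
  obtain ⟨a, b, c, hab, hac, hbc⟩ := Fintype.two_lt_card_iff.1 (by omega : 2 < Fintype.card V)
  obtain ⟨p, hp, hlen, havoid⟩ := exists_isPath_top_of_length (k - 3) (F := {b}) hac.symm
    (by simpa using hbc.symm) (by simpa using hab) (by rw [Finset.card_singleton]; omega)
  refine ⟨a, _, isCycle_cons_cons hp hac (havoid b (by simp)) hab hbc, ?_⟩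
  simp only [Walk.length_cons]
  omega

end Cycles

section CompleteGraph

variable {V : Type*} {σ : Sym2 V → ℤˣ}

theorem quadrilateral_eq_one_of_forall_triangle {ε : ℤˣ}
    (htri : ∀ ⦃a : V⦄ (w : (⊤ : SimpleGraph V).Walk a a),
      w.IsCycle → w.length = 3 → walkSign ⊤ σ w = ε)
    {a b c d : V} (hab : a ≠ b) (hac : a ≠ c) (had : a ≠ d) (hbc : b ≠ c) (hcd : c ≠ d) :
    σ s(a, b) * σ s(b, c) * σ s(c, d) * σ s(d, a) = 1 := by
  have triangle : ∀ x, a ≠ x → x ≠ c → σ s(a, x) * (σ s(x, c) * σ s(c, a)) = ε := by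
    intro x hax hxc
    have hcycle := isCycle_cons_cons (G := ⊤) (p := Walk.cons hac.symm Walk.nil)
      (by simpa using hac.symm) hac (by simp [hxc, hax.symm]) hax hxc
    simpa using htri _ hcycle rfl
  calc σ s(a, b) * σ s(b, c) * σ s(c, d) * σ s(d, a)
      = σ s(a, b) * (σ s(b, c) * σ s(c, a)) * (σ s(a, d) * (σ s(d, c) * σ s(c, a))) := by
        have hdiag := Int.units_mul_self (σ s(c, a))
        rw [Sym2.eq_swap (a := d) (b := a), Sym2.eq_swap (a := d) (b := c)]
        grind
    _ = 1 := by rw [triangle b hab hbc, triangle d had hcd.symm, Int.units_mul_self]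

theorem quadrilateral_eq_one_of_four_le [Fintype V] {k : ℕ} {ε : ℤˣ} (h4 : 4 ≤ k)
    (hk : k ≤ Fintype.card V)
    (hcirc : ∀ ⦃a : V⦄ (w : (⊤ : SimpleGraph V).Walk a a),
      w.IsCycle → w.length = k → walkSign ⊤ σ w = ε)
    {a b c d : V} (hab : a ≠ b) (hac : a ≠ c) (had : a ≠ d) (hbc : b ≠ c) (hbd : b ≠ d)
    (hcd : c ≠ d) : σ s(a, b) * σ s(b, c) * σ s(c, d) * σ s(d, a) = 1 := by
  classical
  obtain ⟨p, hp, hlen, havoid⟩ := exists_isPath_top_of_length (k - 4) (F := {b, d}) hac.symm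
    (by simp [hbc.symm, hcd]) (by simp [hab, had]) (by rw [Finset.card_pair hbd]; omega)
  have circle_sign : ∀ x y, x ∉ p.support → y ∉ p.support → x ≠ y →
      σ s(a, x) * (σ s(x, y) * (σ s(y, c) * walkSign ⊤ σ p)) = ε := by
    intro x y hx hy hxy
    have hax : a ≠ x := fun h => hx (h ▸ p.end_mem_support)
    have hay : a ≠ y := fun h => hy (h ▸ p.end_mem_support)
    have hyc : y ≠ c := fun h => hy (h ▸ p.start_mem_support)
    have hcycle := isCycle_cons_cons (hp.cons hy (h := hyc)) hay
      (by simpa [hxy] using hx) hax hxy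
    simpa using hcirc _ hcycle (by simp only [Walk.length_cons]; omega)
  have hswap := (circle_sign b d (havoid b (by simp)) (havoid d (by simp)) hbd).trans
    (circle_sign d b (havoid d (by simp)) (havoid b (by simp)) hbd.symm).symm
  have hopp : σ s(a, b) * σ s(c, d) = σ s(d, a) * σ s(b, c) := by
    rw [Sym2.eq_swap (a := d) (b := b), Sym2.eq_swap (a := d) (b := c),
      Sym2.eq_swap (a := a) (b := d)] at hswap
    apply mul_right_cancel (b := σ s(b, d) * walkSign ⊤ σ p)
    grind
  calc σ s(a, b) * σ s(b, c) * σ s(c, d) * σ s(d, a)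
      = (σ s(a, b) * σ s(c, d)) * (σ s(d, a) * σ s(b, c)) := by ac_rfl
    _ = 1 := by rw [hopp, Int.units_mul_self]

theorem exists_forall_ne_eq_const {α β : Type*} [Nonempty β] {T : α → α → β}
    (hsymm : ∀ a b, T a b = T b a)
    (hT : ∀ ⦃a b c : α⦄, a ≠ b → a ≠ c → b ≠ c → T a b = T b c) :
    ∃ s, ∀ a b, a ≠ b → T a b = s := by
  by_cases hne : ∃ x y : α, x ≠ y
  · obtain ⟨x, y, hxy⟩ := hne
    have through_x : ∀ c, c ≠ x → T c x = T x y := by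
      intro c hcx
      obtain rfl | hcy := eq_or_ne c y
      · exact hsymm c x
      · exact hT hcx hcy hxy
    refine ⟨T x y, fun a b hab => ?_⟩
    obtain rfl | hbx := eq_or_ne b x
    · exact through_x a hab
    obtain rfl | hax := eq_or_ne a x
    · rw [hsymm, through_x b hbx]
    · rw [hT hab hax hbx, through_x b hbx]
  · exact ⟨Classical.arbitrary β, fun a b hab => (hne ⟨a, b, hab⟩).elim⟩

theorem exists_triangle_eq_of_quadrilateral
    (hquad : ∀ ⦃a b c d : V⦄, a ≠ b → a ≠ c → a ≠ d → b ≠ c → b ≠ d → c ≠ d →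
      σ s(a, b) * σ s(b, c) * σ s(c, d) * σ s(d, a) = 1) (z : V) :
    ∃ s, ∀ a b, a ≠ z → b ≠ z → a ≠ b → σ s(z, a) * σ s(a, b) * σ s(z, b) = s := by
  obtain ⟨s, hs⟩ : ∃ s, ∀ a b : {v // v ≠ z}, a ≠ b →
      σ s(z, a) * σ s(a.1, b.1) * σ s(z, b) = s := by
    apply exists_forall_ne_eq_const
    · intro a b
      rw [Sym2.eq_swap (a := a.1)]
      ac_rfl
    · intro a b c hab hac hbc
      have hzabc := hquad a.2.symm b.2.symm c.2.symm (Subtype.coe_ne_coe.2 hab)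
        (Subtype.coe_ne_coe.2 hac) (Subtype.coe_ne_coe.2 hbc)
      rw [mul_assoc (_ * _), mul_eq_one_iff_eq_inv, Int.units_inv_eq_self,
        Sym2.eq_swap (a := c.1)] at hzabc
      rw [hzabc]
      ac_rfl
  exact ⟨s, fun a b ha hb hab => hs ⟨a, ha⟩ ⟨b, hb⟩ (Subtype.coe_ne_coe.1 hab)⟩

theorem exists_isSwitchingOfConst_of_quadrilateral
    (hquad : ∀ ⦃a b c d : V⦄, a ≠ b → a ≠ c → a ≠ d → b ≠ c → b ≠ d → c ≠ d →
      σ s(a, b) * σ s(b, c) * σ s(c, d) * σ s(d, a) = 1) :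
    ∃ s, IsSwitchingOfConst ⊤ σ s := by
  classical
  obtain hV | ⟨⟨z⟩⟩ := isEmpty_or_nonempty V
  · exact ⟨1, 1, fun a => hV.elim a⟩
  obtain ⟨s, hs⟩ := exists_triangle_eq_of_quadrilateral hquad z
  refine ⟨s, fun v => if v = z then s else σ s(z, v), fun a b hab => ?_⟩
  obtain rfl | ha := eq_or_ne a z
  · simp [hab.ne', Int.units_mul_self]
  obtain rfl | hb := eq_or_ne b z
  · simp [ha, mul_assoc, Int.units_mul_self, Sym2.eq_swap]
  simp only [if_neg ha, if_neg hb, ← hs a b ha hb hab.ne]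
  calc σ s(a, b) = (σ s(z, a) * σ s(z, a)) * σ s(a, b) * (σ s(z, b) * σ s(z, b)) := by
        rw [Int.units_mul_self, Int.units_mul_self, one_mul, mul_one]
    _ = σ s(z, a) * (σ s(z, a) * σ s(a, b) * σ s(z, b)) * σ s(z, b) := by ac_rfl

theorem exists_isSwitchingOfConst_of_forall_isCycle [Fintype V] {k : ℕ} {ε : ℤˣ} (h3 : 3 ≤ k)
    (hk : k ≤ Fintype.card V)
    (hcirc : ∀ ⦃a : V⦄ (w : (⊤ : SimpleGraph V).Walk a a),
      w.IsCycle → w.length = k → walkSign ⊤ σ w = ε) :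
    ∃ s, IsSwitchingOfConst ⊤ σ s := by
  apply exists_isSwitchingOfConst_of_quadrilateral
  intro a b c d hab hac had hbc hbd hcd
  obtain rfl | h4 := h3.eq_or_lt
  · exact quadrilateral_eq_one_of_forall_triangle hcirc hab hac had hbc hcd
  · exact quadrilateral_eq_one_of_four_le h4 hk hcirc hab hac had hbc hbd hcd

theorem sgBalanced_top_of_forall_isCycle_odd [Fintype V] {k : ℕ} (hodd : Odd k) (h3 : 3 ≤ k)
    (hk : k ≤ Fintype.card V)
    (hpos : ∀ ⦃a : V⦄ (w : (⊤ : SimpleGraph V).Walk a a),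
      w.IsCycle → w.length = k → walkSign ⊤ σ w = 1) :
    sgBalanced ⊤ σ := by
  obtain ⟨s, hs⟩ := exists_isSwitchingOfConst_of_forall_isCycle h3 hk hpos
  obtain ⟨a, w, hw, hlen⟩ := exists_isCycle_top_of_length h3 hk
  have hs_one : s = 1 := by
    rw [← hpos w hw hlen, hs.walkSign_closed, hlen, Int.units_pow_eq_pow_mod_two,
      Nat.odd_iff.1 hodd, pow_one]
  exact (hs_one ▸ hs).sgBalanced

theorem negCircCount_top_eq_circCount_iff [Fintype V] [DecidableEq V] {k : ℕ} (hodd : Odd k)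
    (h3 : 3 ≤ k) (hk : k ≤ Fintype.card V) :
    negCircCount ⊤ σ k = circCount (⊤ : SimpleGraph V) k ↔ sgAntibalanced ⊤ σ := by
  rw [negCircCount_eq_circCount_iff]
  constructor
  · intro hneg
    refine sgBalanced_top_of_forall_isCycle_odd hodd h3 hk fun a w hw hlen => ?_
    exact (walkSign_neg_eq_one_iff (hlen ▸ hodd)).2 (hneg w hw hlen)
  · intro hσ a w hw hlen
    exact (walkSign_neg_eq_one_iff (hlen ▸ hodd)).1 (hσ w hw)

end CompleteGraph

theorem max_negCircCount_odd_general {V : Type*} [Fintype V] [DecidableEq V] {k : ℕ}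
    (hodd : Odd k) (h3 : 3 ≤ k) (hk : k ≤ Fintype.card V) :
    (∀ σ : Sym2 V → ℤˣ,
      negCircCount (⊤ : SimpleGraph V) σ k ≤ circCount (⊤ : SimpleGraph V) k) ∧
    negCircCount (⊤ : SimpleGraph V) (fun _ => -1) k = circCount (⊤ : SimpleGraph V) k ∧
    (∀ σ : Sym2 V → ℤˣ, ¬ sgAntibalanced (⊤ : SimpleGraph V) σ →
      negCircCount (⊤ : SimpleGraph V) σ k < circCount (⊤ : SimpleGraph V) k) := by
  refine ⟨fun σ => negCircCount_le_circCount ⊤ σ k, ?_, fun σ hσ => ?_⟩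
  · exact (negCircCount_top_eq_circCount_iff hodd h3 hk).2 (sgAntibalanced_neg_one ⊤)
  · exact (negCircCount_le_circCount ⊤ σ k).lt_of_ne fun heq =>
      hσ ((negCircCount_top_eq_circCount_iff hodd h3 hk).1 heq)

/-- For odd `k` with `3 ≤ k ≤ n`: `max_σ c_k⁻(K_n, σ) = c_k⁻(-K_n) = c_k(K_n)`, and any
signature that is not antibalanced has strictly fewer negative circles of length `k`. -/
theorem max_negCircCount_odd (n k : ℕ) (hodd : Odd k) (h3 : 3 ≤ k) (hkn : k ≤ n) :
    (∀ σ : Sym2 (Fin n) → ℤˣ,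
      negCircCount (⊤ : SimpleGraph (Fin n)) σ k ≤
        circCount (⊤ : SimpleGraph (Fin n)) k) ∧
    negCircCount (⊤ : SimpleGraph (Fin n)) (fun _ => -1) k =
      circCount (⊤ : SimpleGraph (Fin n)) k ∧
    (∀ σ : Sym2 (Fin n) → ℤˣ, ¬ sgAntibalanced (⊤ : SimpleGraph (Fin n)) σ →
      negCircCount (⊤ : SimpleGraph (Fin n)) σ k <
        circCount (⊤ : SimpleGraph (Fin n)) k) :=
  max_negCircCount_odd_general hodd h3 (by rwa [Fintype.card_fin])
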